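/- Let r be a positive integer and 0 < δ < 1/(100r). Let X₀,…,X_r be an SoS-augmented δ-weak martingale sequence of random variables with values in [0,1] such that X₀ = 1/2 almost surely and X_r ∈ {0,1} almost surely. Then P[ Σ_{i=1}^{r} (X_i − X_{i−1})² ≥ 1/16 ] ≥ 1/20. -/

import Mathlib

open MeasureTheory ENNReal

/-- Pathwise bound on the stopped cross terms. -/
lemma sos_pathwise (x : ℕ → ℝ) (r : ℕ) (h0 : x 0 = 1 / 2)
    (hx : ∀ i ≤ r, x i ∈ Set.Icc (0 : ℝ) 1) (n : ℕ) (hn : n ≤ r) :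
    (∑ j ∈ Finset.Icc 1 n, (x j - x (j - 1)) ^ 2 < 1 / 16 →
      ∑ k ∈ Finset.range n,
        (if ∑ j ∈ Finset.Icc 1 k, (x j - x (j - 1)) ^ 2 < 1 / 16 then 2 * (x k - 1 / 2) else 0)
          * (x (k + 1) - x k)
        = (x n - 1 / 2) ^ 2 - ∑ j ∈ Finset.Icc 1 n, (x j - x (j - 1)) ^ 2) ∧
    (¬ ∑ j ∈ Finset.Icc 1 n, (x j - x (j - 1)) ^ 2 < 1 / 16 →
      -(17 / 16) ≤ ∑ k ∈ Finset.range n,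
        (if ∑ j ∈ Finset.Icc 1 k, (x j - x (j - 1)) ^ 2 < 1 / 16 then 2 * (x k - 1 / 2) else 0)
          * (x (k + 1) - x k)) := by
  induction n with
  | zero => simp [h0]
  | succ n ih =>
    obtain ⟨ih1, ih2⟩ := ih (by omega)
    rw [Finset.sum_range_succ, Finset.sum_Icc_succ_top (by omega)]
    simp only [Nat.add_sub_cancel]
    have hsq := sq_nonneg (x (n + 1) - x n)
    obtain ⟨a1, a2⟩ := hx n (by omega)
    obtain ⟨b1, b2⟩ := hx (n + 1) hn
    by_cases h : ∑ j ∈ Finset.Icc 1 n, (x j - x (j - 1)) ^ 2 < 1 / 16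
    · rw [if_pos h, ih1 h]
      refine ⟨fun _ => by ring, fun _ => ?_⟩
      have : (x (n + 1) - x n) ^ 2 ≤ 1 := by nlinarith
      nlinarith [sq_nonneg (x (n + 1) - 1 / 2)]
    · rw [if_neg h, zero_mul, add_zero]
      exact ⟨fun h' => absurd (by linarith) h, fun _ => ih2 h⟩

/-- One-step bound on the expected cross term. -/
lemma sos_step {Ω : Type*} {m m0 : MeasurableSpace Ω} (hm : m ≤ m0) (μ : Measure Ω)
    [IsProbabilityMeasure μ] (δ : ℝ) (g Y Z : Ω → ℝ)
    (hg : Measurable[m] g) (hgb : ∀ᵐ ω ∂μ, |g ω| ≤ 1)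
    (hY : Integrable Y μ) (hZ : Integrable Z μ)
    (h : ∀ᵐ ω ∂μ, |(μ[Z | m]) ω - Y ω| ≤ δ) :
    Integrable (fun ω => g ω * (Z ω - Y ω)) μ ∧ ∫ ω, g ω * (Z ω - Y ω) ∂μ ≤ δ := by
  have hg0 : AEStronglyMeasurable g μ := (hg.mono hm le_rfl).aestronglyMeasurable
  have hgb' : ∀ᵐ ω ∂μ, ‖g ω‖ ≤ 1 := hgb
  have i1 : Integrable (fun ω => g ω * Z ω) μ := hZ.bdd_mul hg0 hgb'
  have i2 : Integrable (fun ω => g ω * Y ω) μ := hY.bdd_mul hg0 hgb'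
  have i3 : Integrable (fun ω => g ω * (μ[Z | m]) ω) μ := integrable_condExp.bdd_mul hg0 hgb'
  have e : ∫ ω, g ω * Z ω ∂μ = ∫ ω, g ω * (μ[Z | m]) ω ∂μ := by
    have := condExp_mul_of_stronglyMeasurable_left (m := m) (μ := μ) hg.stronglyMeasurable i1 hZ
    calc _ = ∫ ω, (μ[g * Z | m]) ω ∂μ := (integral_condExp hm).symm
      _ = _ := integral_congr_ae this
  refine ⟨by simpa only [mul_sub] using! i1.sub i2, ?_⟩
  simp only [mul_sub]
  rw [integral_sub i1 i2, e, ← integral_sub i3 i2]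
  calc _ ≤ ∫ _, δ ∂μ := by
        refine integral_mono_ae (i3.sub i2) (integrable_const _) ?_
        filter_upwards [hgb, h] with ω h1 h2
        show g ω * _ - g ω * _ ≤ δ
        rw [← mul_sub]
        calc _ ≤ |g ω * ((μ[Z | m]) ω - Y ω)| := le_abs_self _
          _ = |g ω| * |(μ[Z | m]) ω - Y ω| := abs_mul _ _
          _ ≤ 1 * δ := mul_le_mul h1 h2 (abs_nonneg _) zero_le_one
          _ = δ := one_mul _
    _ = δ := by simp

/-- **SoS-augmented weak martingales have large sum of squares.**
If `X₀,…,X_r` is an SoS-augmented `δ`-weak martingale with values in `[0,1]`,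
`X₀ = 1/2` a.s. and `X_r ∈ {0,1}` a.s., where `0 < δ < 1/(100 r)`, then
`P[ Σ_{i=1}^r (X_i − X_{i−1})² ≥ 1/16 ] ≥ 1/20`. -/
theorem sos_augmented_weak_martingale_sum_of_squares
    {Ω : Type*} [MeasurableSpace Ω] (μ : Measure Ω) [IsProbabilityMeasure μ]
    (r : ℕ) (hr : 0 < r) (δ : ℝ) (hδ0 : 0 < δ) (hδ : δ < 1 / (100 * r))
    (X : ℕ → Ω → ℝ) (hXmeas : ∀ i, Measurable (X i))
    (hrange : ∀ i ≤ r, ∀ᵐ ω ∂μ, X i ω ∈ Set.Icc (0 : ℝ) 1)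
    (hstart : ∀ᵐ ω ∂μ, X 0 ω = 1 / 2)
    (hend : ∀ᵐ ω ∂μ, X r ω = 0 ∨ X r ω = 1)
    (hmart : ∀ i, 1 ≤ i → i ≤ r → ∀ᵐ ω ∂μ,
      |(μ[X i | MeasurableSpace.comap
          (fun ω => (X (i - 1) ω,
            ∑ j ∈ Finset.Icc 1 (i - 1), (X j ω - X (j - 1) ω) ^ 2))
          inferInstance]) ω - X (i - 1) ω| ≤ δ) :
    (1 / 20 : ℝ≥0∞) ≤
      μ {ω | (1 : ℝ) / 16 ≤ ∑ i ∈ Finset.Icc 1 r, (X i ω - X (i - 1) ω) ^ 2} := by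
  have hS : ∀ n, Measurable fun ω => ∑ j ∈ Finset.Icc 1 n, (X j ω - X (j - 1) ω) ^ 2 := by
    intro n; fun_prop
  have hint : ∀ i ≤ r, Integrable (X i) μ := by
    intro i hi
    refine Integrable.of_bound (hXmeas i).aestronglyMeasurable 1 ?_
    filter_upwards [hrange i hi] with ω h
    rw [Real.norm_eq_abs, abs_le]; exact ⟨by linarith [h.1], h.2⟩
  set g : ℕ → Ω → ℝ := fun k ω =>
    if ∑ j ∈ Finset.Icc 1 k, (X j ω - X (j - 1) ω) ^ 2 < 1 / 16 then 2 * (X k ω - 1 / 2) else 0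
    with hgdef
  have hstep : ∀ k ∈ Finset.range r, Integrable (fun ω => g k ω * (X (k + 1) ω - X k ω)) μ ∧
      ∫ ω, g k ω * (X (k + 1) ω - X k ω) ∂μ ≤ δ := by
    intro k hk
    have hk' : k < r := Finset.mem_range.mp hk
    have hm := hmart (k + 1) (by omega) (by omega)
    simp only [Nat.add_sub_cancel] at hm
    refine sos_step ?_ μ δ (g k) (X k) (X (k + 1)) ?_ ?_ (hint k (by omega))
      (hint (k + 1) (by omega)) hm
    · exact ((hXmeas k).prodMk (hS k)).comap_le
    · have hF : Measurable fun p : ℝ × ℝ => if p.2 < 1 / 16 then 2 * (p.1 - 1 / 2) else 0 := by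
        refine Measurable.ite (measurableSet_lt measurable_snd measurable_const) ?_
          measurable_const
        fun_prop
      exact hF.comp (comap_measurable _)
    · filter_upwards [hrange k (by omega)] with ω h
      simp only [hgdef]
      split_ifs
      · rw [abs_le]; constructor <;> linarith [h.1, h.2]
      · simp
  set B : Set Ω := {ω | (1 : ℝ) / 16 ≤ ∑ i ∈ Finset.Icc 1 r, (X i ω - X (i - 1) ω) ^ 2} with hB
  have hBm : MeasurableSet B := measurableSet_le measurable_const (hS r)
  have hCint : Integrable (fun ω => ∑ k ∈ Finset.range r, g k ω * (X (k + 1) ω - X k ω)) μ :=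
    integrable_finset_sum _ fun k hk => (hstep k hk).1
  have hup : ∫ ω, ∑ k ∈ Finset.range r, g k ω * (X (k + 1) ω - X k ω) ∂μ ≤ 1 / 100 := by
    rw [integral_finset_sum _ fun k hk => (hstep k hk).1]
    have hr' : (0 : ℝ) < r := by exact_mod_cast hr
    have h1 := Finset.sum_le_sum fun k hk => (hstep k hk).2
    simp only [Finset.sum_const, Finset.card_range, nsmul_eq_mul] at h1
    rw [lt_div_iff₀ (by positivity)] at hδ
    linarith
  have hall : ∀ᵐ ω ∂μ, ∀ i ≤ r, X i ω ∈ Set.Icc (0 : ℝ) 1 := by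
    rw [ae_all_iff]; intro i
    by_cases hi : i ≤ r
    · filter_upwards [hrange i hi] with ω h _ using h
    · exact Filter.Eventually.of_forall fun ω h => absurd h hi
  have hlow : ∫ ω, (3 / 16 - B.indicator (fun _ => (20 / 16 : ℝ)) ω) ∂μ ≤
      ∫ ω, ∑ k ∈ Finset.range r, g k ω * (X (k + 1) ω - X k ω) ∂μ := by
    refine integral_mono_ae ((integrable_const _).sub ((integrable_const _).indicator hBm))
      hCint ?_
    filter_upwards [hall, hstart, hend] with ω h1 h2 h3
    obtain ⟨p1, p2⟩ := sos_pathwise (fun i => X i ω) r h2 h1 r le_rfl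
    by_cases hω : ω ∈ B
    · have := p2 (not_lt.mpr hω)
      simp only [Set.indicator_of_mem hω, hgdef]
      linarith
    · have hlt : ∑ i ∈ Finset.Icc 1 r, (X i ω - X (i - 1) ω) ^ 2 < 1 / 16 := not_le.mp hω
      have := p1 hlt
      have h4 : (X r ω - 1 / 2) ^ 2 = 1 / 4 := by rcases h3 with h | h <;> rw [h] <;> norm_num
      simp only [Set.indicator_of_notMem hω, hgdef]
      linarith
  rw [integral_sub (integrable_const _) ((integrable_const _).indicator hBm),
    integral_indicator_const _ hBm] at hlow
  simp only [integral_const, probReal_univ, smul_eq_mul, one_mul] at hlow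
  have hp : (1 / 20 : ℝ) ≤ μ.real B := by linarith
  have : ENNReal.ofReal (1 / 20) ≤ μ B := by
    rw [ENNReal.ofReal_le_iff_le_toReal (measure_ne_top _ _)]; exact hp
  rwa [ENNReal.ofReal_div_of_pos (by norm_num), ENNReal.ofReal_one, ENNReal.ofReal_ofNat] at this
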